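/- Let Λ be a unimodular lattice in ℝ^d with dual lattice Λ*. For every τ ∈ T one has S_1(Λ,τ) ≤ (S_1(Λ*,−τ) + d·log(d!))/(d−1); in particular, S_1(Λ,τ) ≤ S_1(Λ*,−τ)/(d−1) + C for a constant C depending only on d. -/

import Mathlib

open Filter

noncomputable section

/-- A unimodular lattice in `ℝ^d`: the set of integer linear combinations of a basis of `ℝ^d`
whose matrix has determinant `±1`. -/
def IsUnimodularLattice (d : ℕ) (Λ : Set (Fin d → ℝ)) : Prop :=
  ∃ B : Matrix (Fin d) (Fin d) ℝ, |B.det| = 1 ∧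
    Λ = {v | ∃ x : Fin d → ℤ, v = B.mulVec fun i => (x i : ℝ)}

/-- The dual lattice `Λ* = {w : ⟨w, z⟩ ∈ ℤ for all z ∈ Λ}`. -/
def dualLattice (d : ℕ) (Λ : Set (Fin d → ℝ)) : Set (Fin d → ℝ) :=
  {w | ∀ z ∈ Λ, ∃ c : ℤ, ∑ i, w i * z i = (c : ℝ)}

/-- The `k`-th successive minimum `λ_k(B_τ, Λ)` of the box
`B_τ = {z : |z_i| ≤ exp (τ i)}` with respect to the lattice `Λ`. -/
def succMin (d : ℕ) (Λ : Set (Fin d → ℝ)) (τ : Fin d → ℝ) (k : ℕ) : ℝ :=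
  sInf {lam : ℝ | 0 < lam ∧ ∃ v : Fin k → (Fin d → ℝ),
    (∀ l, v l ∈ Λ) ∧ LinearIndependent ℝ v ∧ ∀ l i, |v l i| ≤ lam * Real.exp (τ i)}

/-- `L_k(Λ, τ) = log λ_k(B_τ, Λ)`. -/
def Lk (d : ℕ) (Λ : Set (Fin d → ℝ)) (τ : Fin d → ℝ) (k : ℕ) : ℝ :=
  Real.log (succMin d Λ τ k)

/-- `S_k(Λ, τ) = L_1(Λ, τ) + ⋯ + L_k(Λ, τ)`. -/
def Sk (d : ℕ) (Λ : Set (Fin d → ℝ)) (τ : Fin d → ℝ) (k : ℕ) : ℝ :=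
  ∑ j ∈ Finset.Icc 1 k, Lk d Λ τ j

open MeasureTheory in
/-- Minkowski's linear forms theorem (strict version). -/
theorem linear_forms (d : ℕ) (M : Matrix (Fin d) (Fin d) ℝ) (hM : M.det ≠ 0)
    (c : Fin d → ℝ) (hc : ∀ i, 0 < c i) (h : |M.det| < ∏ i, c i) :
    ∃ x : Fin d → ℤ, x ≠ 0 ∧ ∀ i, |M.mulVec (fun k => (x k : ℝ)) i| < c i := by
  classical
  set box : Set (Fin d → ℝ) := Set.pi Set.univ fun i => Set.Ioo (-c i) (c i) with hbox
  set f : (Fin d → ℝ) →ₗ[ℝ] (Fin d → ℝ) := Matrix.toLin' M with hf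
  have hdet : LinearMap.det f = M.det := LinearMap.det_toLin' M
  have hconv : Convex ℝ (f ⁻¹' box) :=
    (convex_pi fun i _ => convex_Ioo _ _).linear_preimage f
  have hsymm : ∀ x ∈ f ⁻¹' box, -x ∈ f ⁻¹' box := by
    intro x hx i hi
    have := hx i hi
    simp only [Set.mem_Ioo, map_neg, Pi.neg_apply] at this ⊢
    constructor <;> linarith [this.1, this.2]
  have hvol : volume (ZSpan.fundamentalDomain (Pi.basisFun ℝ (Fin d))) = 1 := by
    rw [ZSpan.fundamentalDomain_pi_basisFun, volume_pi, Measure.pi_pi]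
    simp
  have : Countable (Submodule.span ℤ (Set.range (Pi.basisFun ℝ (Fin d)))).toAddSubgroup :=
    inferInstanceAs (Countable (Submodule.span ℤ (Set.range (Pi.basisFun ℝ (Fin d)))))
  have hmeas : volume (ZSpan.fundamentalDomain (Pi.basisFun ℝ (Fin d))) *
      2 ^ Module.finrank ℝ (Fin d → ℝ) < volume (f ⁻¹' box) := by
    rw [hvol, one_mul, Measure.addHaar_preimage_linearMap _ (by rw [hdet]; exact hM), hbox,
      Real.volume_pi_Ioo, hdet, Module.finrank_fin_fun,
      ← ENNReal.ofReal_prod_of_nonneg (fun i _ => by linarith [hc i]),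
      ← ENNReal.ofReal_mul (abs_nonneg _)]
    have h2 : (2 : ENNReal) ^ d = ENNReal.ofReal (2 ^ d) := by
      rw [ENNReal.ofReal_pow (by norm_num)]; simp
    rw [h2]
    have hp : 0 < |M.det| := abs_pos.mpr hM
    have h3 : ∏ i, (c i - -c i) = 2 ^ d * ∏ i, c i := by
      rw [show (2 : ℝ) ^ d = ∏ _i : Fin d, (2 : ℝ) by simp, ← Finset.prod_mul_distrib]
      exact Finset.prod_congr rfl fun i _ => by ring
    have h4 : (2 : ℝ) ^ d < |M.det⁻¹| * ∏ i, (c i - -c i) := by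
      rw [h3, abs_inv, inv_mul_eq_div, lt_div_iff₀ hp]
      exact mul_lt_mul_of_pos_left h (by positivity)
    exact (ENNReal.ofReal_lt_ofReal_iff (lt_trans (by positivity) h4)).mpr h4
  obtain ⟨⟨y, hy⟩, hy0, hys⟩ := exists_ne_zero_mem_lattice_of_measure_mul_two_pow_lt_measure
    (ZSpan.isAddFundamentalDomain' (Pi.basisFun ℝ (Fin d)) volume) hsymm hconv hmeas
  have hy' : ∀ i, ∃ n : ℤ, (n : ℝ) = y i := by
    have := ((Pi.basisFun ℝ (Fin d)).mem_span_iff_repr_mem ℤ y).mp hy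
    intro i
    obtain ⟨n, hn⟩ := this i
    exact ⟨n, by simpa using hn⟩
  choose x hx using hy'
  have hxy : (fun k => (x k : ℝ)) = y := funext hx
  refine ⟨x, ?_, ?_⟩
  · rintro rfl
    apply hy0
    ext i
    simp [← hxy]
  · intro i
    rw [hxy, abs_lt]
    exact hys i (Set.mem_univ i)

/-- The set whose infimum is the first minimum. -/
def minSet (d : ℕ) (Λ : Set (Fin d → ℝ)) (τ : Fin d → ℝ) : Set ℝ :=
  {lam : ℝ | 0 < lam ∧ ∃ v ∈ Λ, v ≠ 0 ∧ ∀ i, |v i| ≤ lam * Real.exp (τ i)}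

theorem succMin_one (d : ℕ) (Λ : Set (Fin d → ℝ)) (τ : Fin d → ℝ) :
    succMin d Λ τ 1 = sInf (minSet d Λ τ) := by
  unfold succMin minSet
  congr 1
  ext lam
  simp only [Set.mem_ofPred_eq]
  refine and_congr_right fun _ => ⟨?_, ?_⟩
  · rintro ⟨v, h1, h2, h3⟩
    exact ⟨v 0, h1 0, h2.ne_zero 0, h3 0⟩
  · rintro ⟨v, h1, h2, h3⟩
    refine ⟨fun _ => v, fun _ => h1, ?_, fun _ => h3⟩
    exact linearIndependent_unique_iff.mpr h2

theorem Sk_one (d : ℕ) (Λ : Set (Fin d → ℝ)) (τ : Fin d → ℝ) :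
    Sk d Λ τ 1 = Real.log (sInf (minSet d Λ τ)) := by
  simp [Sk, Lk, succMin_one]

theorem key_step (d : ℕ) (hd : 2 ≤ d) (B : Matrix (Fin d) (Fin d) ℝ) (hB : |B.det| = 1)
    (Λ : Set (Fin d → ℝ)) (hΛ : Λ = {v | ∃ x : Fin d → ℤ, v = B.mulVec fun i => (x i : ℝ)})
    (τ : Fin d → ℝ) (hτ : ∑ i, τ i = 0) (μ : ℝ) (hμ : μ ∈ minSet d (dualLattice d Λ) (-τ))
    (lam : ℝ) (hlam : 0 < lam) (h : μ < lam ^ (d - 1)) :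
    ((d : ℝ) - 1) * lam ∈ minSet d Λ τ := by
  classical
  obtain ⟨hμ0, w, hw, hw0, hwb⟩ := hμ
  have hdR : (2 : ℝ) ≤ d := by exact_mod_cast hd
  have : Nonempty (Fin d) := ⟨⟨0, by omega⟩⟩
  obtain ⟨j, hj⟩ := Finite.exists_max fun i => |w i| * Real.exp (τ i)
  have hwj : w j ≠ 0 := by
    intro h0
    apply hw0
    ext i
    have := hj i
    simp only [h0, abs_zero, zero_mul] at this
    have h1 : |w i| ≤ 0 := by
      by_contra hc
      push Not at hc
      have := mul_pos hc (Real.exp_pos (τ i))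
      linarith
    simpa using h1
  have hm : |w j| * Real.exp (τ j) ≤ μ := by
    have := hwb j
    simp only [Pi.neg_apply, Real.exp_neg] at this
    rwa [← div_eq_mul_inv, le_div_iff₀ (Real.exp_pos _)] at this
  set A : Matrix (Fin d) (Fin d) ℝ := (1 : Matrix (Fin d) (Fin d) ℝ).updateRow j w with hA
  have hAdet : A.det = w j := by
    rw [hA, ← Matrix.cramer_transpose_apply, Matrix.transpose_one, Matrix.cramer_one]
    rfl
  have hMdet : |(A * B).det| = |w j| := by
    rw [Matrix.det_mul, abs_mul, hB, mul_one, hAdet]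
  have hM0 : (A * B).det ≠ 0 := by
    rw [← abs_pos, hMdet]; exact abs_pos.mpr hwj
  set c : Fin d → ℝ := Function.update (fun i => lam * Real.exp (τ i)) j 1 with hc
  have hcpos : ∀ i, 0 < c i := by
    intro i
    by_cases hi : i = j
    · subst hi; simp [hc]
    · simp only [hc, Function.update_of_ne hi]; positivity
  have hprod : ∏ i, c i = lam ^ (d - 1) * Real.exp (-τ j) := by
    rw [hc, Finset.prod_update_of_mem (Finset.mem_univ j), one_mul, Finset.prod_mul_distrib,
      ← Real.exp_sum]
    have h1 : ∑ i ∈ Finset.univ \ {j}, τ i = -τ j := by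
      have := Finset.sum_sdiff_eq_sub (f := τ) (Finset.subset_univ {j})
      simp only [Finset.sum_singleton, hτ] at this
      linarith
    rw [h1]
    simp [Finset.card_sdiff]
  have hlt : |(A * B).det| < ∏ i, c i := by
    rw [hMdet, hprod, Real.exp_neg, ← div_eq_mul_inv, lt_div_iff₀ (Real.exp_pos _)]
    linarith
  obtain ⟨x, hx0, hx⟩ := linear_forms d (A * B) hM0 c hcpos hlt
  set z := B.mulVec fun i => (x i : ℝ) with hz
  have hzΛ : z ∈ Λ := by rw [hΛ]; exact ⟨x, rfl⟩
  have hz0 : z ≠ 0 := by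
    intro h0
    apply hx0
    have hBd : B.det ≠ 0 := by intro h; simp [h] at hB
    have := Matrix.eq_zero_of_mulVec_eq_zero hBd h0
    ext i
    have := congrFun this i
    simpa using this
  rw [← Matrix.mulVec_mulVec, ← hz] at hx
  have hxi : ∀ i, i ≠ j → |z i| < lam * Real.exp (τ i) := by
    intro i hi
    have h1 := hx i
    have h2 : A.mulVec z i = z i := by
      change A i ⬝ᵥ z = z i
      rw [hA, Matrix.updateRow_ne hi]
      change (1 : Matrix (Fin d) (Fin d) ℝ).mulVec z i = z i
      rw [Matrix.one_mulVec]
    rw [h2] at h1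
    simpa [hc, Function.update_of_ne hi] using h1
  have hxj : ∑ i, w i * z i = 0 := by
    have h1 := hx j
    have h2 : |∑ i, w i * z i| < 1 := by
      simpa [hc, hA, Matrix.mulVec, dotProduct] using h1
    obtain ⟨n, hn⟩ := hw z hzΛ
    rw [hn] at h2 ⊢
    have h3 : |n| < 1 := by exact_mod_cast h2
    rw [Int.abs_lt_one_iff] at h3
    simp [h3]
  have hzj : |z j| ≤ (d - 1) * lam * Real.exp (τ j) := by
    have h1 : w j * z j = - ∑ i ∈ Finset.univ.erase j, w i * z i := by
      have := Finset.add_sum_erase Finset.univ (fun i => w i * z i) (Finset.mem_univ j)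
      simp only [hxj] at this
      linarith
    have h2 : |w j| * |z j| ≤ |w j| * ((d - 1) * lam * Real.exp (τ j)) := by
      rw [← abs_mul, h1, abs_neg]
      calc |∑ i ∈ Finset.univ.erase j, w i * z i|
          ≤ ∑ i ∈ Finset.univ.erase j, |w i * z i| := Finset.abs_sum_le_sum_abs _ _
        _ ≤ ∑ i ∈ Finset.univ.erase j, lam * (|w j| * Real.exp (τ j)) := by
            refine Finset.sum_le_sum fun i hi => ?_
            rw [abs_mul]
            calc |w i| * |z i| ≤ |w i| * (lam * Real.exp (τ i)) :=
                  mul_le_mul_of_nonneg_left (hxi i (Finset.ne_of_mem_erase hi)).le (abs_nonneg _)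
              _ = lam * (|w i| * Real.exp (τ i)) := by ring
              _ ≤ _ := mul_le_mul_of_nonneg_left (hj i) hlam.le
        _ = _ := by
            rw [Finset.sum_const, Finset.card_erase_of_mem (Finset.mem_univ j), Finset.card_univ,
              Fintype.card_fin, nsmul_eq_mul, Nat.cast_sub (by omega)]
            push_cast
            ring
    exact le_of_mul_le_mul_left h2 (abs_pos.mpr hwj)
  refine ⟨mul_pos (by linarith) hlam, z, hzΛ, hz0, fun i => ?_⟩
  by_cases hi : i = j
  · subst hi; exact hzj
  · refine (hxi i hi).le.trans ?_
    have : 0 < lam * Real.exp (τ i) := by positivity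
    nlinarith

theorem main_ineq (d : ℕ) (hd : 2 ≤ d) (Λ : Set (Fin d → ℝ)) (hL : IsUnimodularLattice d Λ)
    (τ : Fin d → ℝ) (hτ : ∑ i, τ i = 0) :
    Sk d Λ τ 1 ≤
      (Sk d (dualLattice d Λ) (-τ) 1 + (d : ℝ) * Real.log (Nat.factorial d)) / ((d : ℝ) - 1) := by
  classical
  obtain ⟨B, hB, hΛ⟩ := hL
  have hdR : (2 : ℝ) ≤ d := by exact_mod_cast hd
  have hd1 : (0 : ℝ) < d - 1 := by linarith
  have hBd : B.det ≠ 0 := by intro h; simp [h] at hB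
  have hBu : IsUnit B.det := isUnit_iff_ne_zero.mpr hBd
  rw [Sk_one, Sk_one]
  set s := sInf (minSet d Λ τ) with hs
  set t := sInf (minSet d (dualLattice d Λ) (-τ)) with ht
  have hbdd : BddBelow (minSet d Λ τ) := ⟨0, fun l hl => hl.1.le⟩
  -- the dual set is nonempty
  have hne : (minSet d (dualLattice d Λ) (-τ)).Nonempty := by
    let i0 : Fin d := ⟨0, by omega⟩
    refine ⟨1 + ∑ i, |B⁻¹ i0 i| * Real.exp (τ i), by positivity, B⁻¹ i0, ?_, ?_, ?_⟩
    · intro z hz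
      rw [hΛ] at hz
      obtain ⟨x, rfl⟩ := hz
      refine ⟨x i0, ?_⟩
      change (B⁻¹.mulVec (B.mulVec fun i => (x i : ℝ))) i0 = _
      rw [Matrix.mulVec_mulVec, Matrix.nonsing_inv_mul _ hBu, Matrix.one_mulVec]
    · intro h0
      have h1 : (B⁻¹ * B) i0 i0 = 1 := by rw [Matrix.nonsing_inv_mul _ hBu]; simp
      rw [Matrix.mul_apply] at h1
      simp [h0] at h1
    · intro i
      rw [Pi.neg_apply, Real.exp_neg, ← div_eq_mul_inv, le_div_iff₀ (Real.exp_pos _)]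
      have := Finset.single_le_sum (f := fun i => |B⁻¹ i0 i| * Real.exp (τ i))
        (fun i _ => by positivity) (Finset.mem_univ i)
      linarith
  have hroot : ∀ μ ∈ minSet d (dualLattice d Λ) (-τ), (s / (d - 1)) ^ (d - 1) ≤ μ := by
    intro μ hμ
    by_contra hcon
    push Not at hcon
    have hs0 : 0 ≤ s := Real.sInf_nonneg fun l hl => hl.1.le
    -- choose a slightly smaller value by continuity
    have hcont : ContinuousAt (fun y : ℝ => y ^ (d - 1)) (s / (d - 1)) := by fun_prop
    have hev := hcont.eventually (lt_mem_nhds hcon)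
    have hpos : 0 < s / ((d : ℝ) - 1) := by
      refine lt_of_le_of_ne (div_nonneg hs0 hd1.le) fun h0 => ?_
      rw [← h0, zero_pow (by omega)] at hcon
      exact absurd hμ.1 (not_lt.mpr hcon.le)
    have hev2 : ∀ᶠ y in nhdsWithin (s / ((d : ℝ) - 1)) (Set.Iio (s / ((d : ℝ) - 1))),
        0 < y ∧ y < s / ((d : ℝ) - 1) ∧ μ < y ^ (d - 1) := by
      filter_upwards [nhdsWithin_le_nhds hev, nhdsWithin_le_nhds (lt_mem_nhds hpos),
        self_mem_nhdsWithin] with y h1 h2 h3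
      exact ⟨h2, h3, h1⟩
    obtain ⟨y, hy0, hys, hyμ⟩ := hev2.exists
    have hmem := key_step d hd B hB Λ hΛ τ hτ μ hμ y hy0 hyμ
    have := csInf_le hbdd hmem
    rw [lt_div_iff₀ hd1] at hys
    linarith
  have hst : (s / (d - 1)) ^ (d - 1) ≤ t := le_csInf hne hroot
  have hnep : (minSet d Λ τ).Nonempty := by
    obtain ⟨μ, hμ⟩ := hne
    refine ⟨_, key_step d hd B hB Λ hΛ τ hτ μ hμ (μ + 1) (by linarith [hμ.1]) ?_⟩
    calc μ < μ + 1 := by linarith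
      _ ≤ (μ + 1) ^ (d - 1) := le_self_pow₀ (by linarith [hμ.1]) (by omega)
  have hspos : 0 < s := by
    set K := 1 + ∑ k, ∑ i, |B⁻¹ k i| * Real.exp (τ i) with hK
    have hKpos : 0 < K := by positivity
    refine lt_of_lt_of_le (inv_pos.mpr hKpos) (le_csInf hnep ?_)
    rintro l ⟨hl, v, hv, hv0, hvb⟩
    rw [hΛ] at hv
    obtain ⟨x, rfl⟩ := hv
    have hx0 : ∃ k, x k ≠ 0 := by
      by_contra hcon
      push Not at hcon
      apply hv0
      have : (fun i => (x i : ℝ)) = 0 := by ext i; simp [hcon]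
      rw [this, Matrix.mulVec_zero]
    obtain ⟨k, hk⟩ := hx0
    have h1 : (1 : ℝ) ≤ |(x k : ℝ)| := by exact_mod_cast Int.one_le_abs hk
    set v := B.mulVec fun i => (x i : ℝ) with hvdef
    have h2 : (x k : ℝ) = ∑ i, B⁻¹ k i * v i := by
      change _ = (B⁻¹.mulVec v) k
      rw [hvdef, Matrix.mulVec_mulVec, Matrix.nonsing_inv_mul _ hBu, Matrix.one_mulVec]
    have h3 : |(x k : ℝ)| ≤ l * ∑ i, |B⁻¹ k i| * Real.exp (τ i) := by
      rw [h2, Finset.mul_sum]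
      refine (Finset.abs_sum_le_sum_abs _ _).trans (Finset.sum_le_sum fun i _ => ?_)
      rw [abs_mul]
      calc |B⁻¹ k i| * |v i| ≤ |B⁻¹ k i| * (l * Real.exp (τ i)) :=
            mul_le_mul_of_nonneg_left (hvb i) (abs_nonneg _)
        _ = _ := by ring
    have h4 : ∑ i, |B⁻¹ k i| * Real.exp (τ i) ≤ K := by
      have := Finset.single_le_sum (f := fun k => ∑ i, |B⁻¹ k i| * Real.exp (τ i))
        (fun i _ => by positivity) (Finset.mem_univ k)
      linarith
    rw [inv_le_iff_one_le_mul₀ hKpos]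
    calc 1 ≤ _ := h1.trans h3
      _ ≤ l * K := mul_le_mul_of_nonneg_left h4 hl.le
  -- take logarithms
  have hq : 0 < s / ((d : ℝ) - 1) := div_pos hspos hd1
  have hlog := Real.log_le_log (pow_pos hq _) hst
  rw [Real.log_pow, Real.log_div hspos.ne' hd1.ne', Nat.cast_sub (by omega), Nat.cast_one] at hlog
  have hfac : Real.log ((d : ℝ) - 1) ≤ Real.log (Nat.factorial d) := by
    refine Real.log_le_log hd1 ?_
    have : (d : ℝ) ≤ Nat.factorial d := by exact_mod_cast Nat.self_le_factorial d
    linarith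
  have hl0 : 0 ≤ Real.log (Nat.factorial d) :=
    Real.log_nonneg (by exact_mod_cast Nat.factorial_pos d)
  rw [le_div_iff₀ hd1]
  have := mul_le_mul_of_nonneg_left hfac hd1.le
  nlinarith

theorem stmt7 (d : ℕ) (hd : 2 ≤ d) :
    (∀ Λ : Set (Fin d → ℝ), IsUnimodularLattice d Λ →
      ∀ τ : Fin d → ℝ, ∑ i, τ i = 0 →
        Sk d Λ τ 1 ≤
          (Sk d (dualLattice d Λ) (-τ) 1 + (d : ℝ) * Real.log (Nat.factorial d)) / ((d : ℝ) - 1)) ∧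
    ∃ C : ℝ, ∀ Λ : Set (Fin d → ℝ), IsUnimodularLattice d Λ →
      ∀ τ : Fin d → ℝ, ∑ i, τ i = 0 →
        Sk d Λ τ 1 ≤ Sk d (dualLattice d Λ) (-τ) 1 / ((d : ℝ) - 1) + C := by
  refine ⟨fun Λ hL τ hτ => main_ineq d hd Λ hL τ hτ,
    (d : ℝ) * Real.log (Nat.factorial d) / ((d : ℝ) - 1), fun Λ hL τ hτ => ?_⟩
  rw [← add_div]
  exact main_ineq d hd Λ hL τ hτ
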